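/- (Invariance of the noncommutative discriminant.) Let R_d be the space of binary forms of degree d in variables X, Y over ℂ, with the SL(2,ℂ)-action (g·p)(v) = p(g⁻¹·v). Writing each p ∈ R_d as p = Σ_{j=0}^d binom(d,j) ξ_j(p) X^j Y^{d−j}, define the bilinear form F : R_d × R_d → ℂ by F(p, q) = Σ_{k=0}^{d} (−1)^k binom(d,k) ξ_{d−k}(p) ξ_k(q). Then F is SL(2,ℂ)-invariant: F(g·p, g·q) = F(p, q) for all g ∈ SL(2,ℂ) and all p, q ∈ R_d. (For d = 2 this is the noncommutative discriminant a₂a₀ − a₁a₁ + a₀a₂.) -/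

import Mathlib

/-!
Pairing `p` with the `d`-th power of a linear form `aX + bY`, whose normalized coefficients are
`a ^ k * b ^ (d - k)`, evaluates `p` at the vector `(b, -a)` (`pairing_power`). Powers of linear
forms span the binary forms of degree `d`, by invertibility of a Vandermonde matrix
(`exists_power_sum`), so by linearity it suffices to treat `q = (tX + Y) ^ d`. With `h = g⁻¹`, the
form `g • q` is again a power of a linear form `aX + bY`, where `(a, b) = (t, 1) h`, and
`det h = 1` gives `h (b, -a) = (1, -t)`. Hence
`F (g • p) (g • q) = (g • p) (b, -a) = p (h (b, -a)) = p (1, -t) = F p q`.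
-/

/-- The binary form of degree `d` with (normalized) coefficients `ξ`, evaluated at the
vector `v ∈ ℂ²`:  `p_ξ(v) = Σ_{k=0}^{d} binom(d,k) ξ_k v₀^k v₁^{d−k}`. -/
noncomputable def Pval (d : ℕ) (ξ : Fin (d + 1) → ℂ) (v : Fin 2 → ℂ) : ℂ :=
  ∑ k : Fin (d + 1), (d.choose (k : ℕ) : ℂ) * ξ k * v 0 ^ (k : ℕ) * v 1 ^ (d - (k : ℕ))

lemma pairing_power (d : ℕ) (ξ : Fin (d + 1) → ℂ) (a b : ℂ) :
    ∑ k : Fin (d + 1), (-1 : ℂ) ^ (k : ℕ) * (d.choose (k : ℕ) : ℂ) *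
        ξ k.rev * (a ^ (k : ℕ) * b ^ (d - (k : ℕ))) = Pval d ξ ![b, -a] := by
  unfold Pval
  rw [← Equiv.sum_comp Fin.revPerm]
  refine Finset.sum_congr rfl fun k _ => ?_
  have hk : (k : ℕ) ≤ d := Nat.lt_succ_iff.mp k.isLt
  have hrev : ((Fin.revPerm k : Fin (d + 1)) : ℕ) = d - k := by
    simp [Fin.val_rev]
  simp only [hrev, Nat.choose_symm hk, Nat.sub_sub_self hk]
  simp only [Fin.revPerm_apply, Fin.rev_rev, Matrix.cons_val_zero, Matrix.cons_val_one, neg_pow a]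
  ring

lemma Pval_power (d : ℕ) (a b : ℂ) (v : Fin 2 → ℂ) :
    Pval d (fun k => a ^ (k : ℕ) * b ^ (d - (k : ℕ))) v = (a * v 0 + b * v 1) ^ d := by
  rw [add_pow, Finset.sum_range]
  refine Finset.sum_congr rfl fun k _ => ?_
  rw [mul_pow, mul_pow]
  ring

lemma Pval_sum (d : ℕ) (c : Fin (d + 1) → ℂ) (f : Fin (d + 1) → Fin (d + 1) → ℂ)
    (v : Fin 2 → ℂ) :
    Pval d (fun k => ∑ i, c i * f i k) v = ∑ i, c i * Pval d (f i) v := by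
  simp only [Pval, Finset.mul_sum, Finset.sum_mul]
  rw [Finset.sum_comm]
  refine Finset.sum_congr rfl fun i _ => Finset.sum_congr rfl fun k _ => ?_
  ring

lemma vandermonde_nat_det_ne_zero (d : ℕ) :
    (Matrix.vandermonde fun i : Fin (d + 1) => ((i : ℕ) : ℂ)).det ≠ 0 := by
  rw [Matrix.det_vandermonde_ne_zero_iff]
  intro i j hij
  exact Fin.ext (Nat.cast_injective hij)

/-- A binary form is determined by its values, already at the points `(i, 1)` with
`i = 0, …, d`. -/
lemma Pval_injective (d : ℕ) (ξ η : Fin (d + 1) → ℂ) (h : ∀ v, Pval d ξ v = Pval d η v) :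
    ξ = η := by
  have key := Matrix.eq_zero_of_mulVec_eq_zero (vandermonde_nat_det_ne_zero d)
    (v := fun k => (d.choose (k : ℕ) : ℂ) * (ξ k - η k)) (by
      ext i
      have hi := h ![((i : ℕ) : ℂ), 1]
      rw [← sub_eq_zero] at hi
      simp only [Pval, ← Finset.sum_sub_distrib] at hi
      simp only [Matrix.mulVec, dotProduct, Matrix.vandermonde_apply, Pi.zero_apply]
      rw [← hi]
      refine Finset.sum_congr rfl fun k _ => ?_
      simp
      ring)
  ext k
  have hk := congrFun key k
  have hc : (d.choose (k : ℕ) : ℂ) ≠ 0 := by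
    exact_mod_cast (Nat.choose_pos (Nat.lt_succ_iff.mp k.isLt)).ne'
  exact sub_eq_zero.mp ((mul_eq_zero.mp hk).resolve_left hc)

/-- Every binary form is a linear combination of the powers `(iX + Y) ^ d`, `i = 0, …, d`. -/
lemma exists_power_sum (d : ℕ) (η : Fin (d + 1) → ℂ) :
    ∃ c : Fin (d + 1) → ℂ,
      η = fun k : Fin (d + 1) => ∑ i, c i * (((i : ℕ) : ℂ) ^ (k : ℕ) * 1 ^ (d - (k : ℕ))) := by
  have hu := (Matrix.isUnit_iff_isUnit_det _).mpr (vandermonde_nat_det_ne_zero d).isUnit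
  obtain ⟨c, hc⟩ := Matrix.vecMul_surjective_iff_isUnit.mpr hu η
  refine ⟨c, ?_⟩
  rw [← hc]
  ext k
  simp [Matrix.vecMul, dotProduct, Matrix.vandermonde_apply]

lemma pairing_power_sum (d : ℕ) (ξ c a b : Fin (d + 1) → ℂ) :
    ∑ k : Fin (d + 1), (-1 : ℂ) ^ (k : ℕ) * (d.choose (k : ℕ) : ℂ) *
        ξ k.rev * (∑ i, c i * (a i ^ (k : ℕ) * b i ^ (d - (k : ℕ)))) =
      ∑ i, c i * Pval d ξ ![b i, -a i] := by
  simp only [← pairing_power, Finset.mul_sum]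
  rw [Finset.sum_comm]
  refine Finset.sum_congr rfl fun i _ => Finset.sum_congr rfl fun k _ => ?_
  ring

/-- **Invariance of the noncommutative discriminant.**  Writing binary forms of degree
`d` through their normalized coefficients, `p = Σ_j binom(d,j) ξ_j X^j Y^{d−j}`,
the bilinear form `F(p, q) = Σ_k (−1)^k binom(d,k) ξ_{d−k}(p) ξ_k(q)` is
`SL(2,ℂ)`-invariant: if `ξ'` and `η'` are the coefficient vectors of `g·p` and `g·q`
(where `(g·p)(v) = p(g⁻¹·v)`), then `F(g·p, g·q) = F(p, q)`.  For `d = 2` this is the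
noncommutative discriminant `a₂a₀ − a₁a₁ + a₀a₂`. -/
theorem discriminant_invariant (d : ℕ) (g : Matrix.SpecialLinearGroup (Fin 2) ℂ)
    (ξ η ξ' η' : Fin (d + 1) → ℂ)
    (hξ : ∀ v, Pval d ξ' v = Pval d ξ
      (((g⁻¹ : Matrix.SpecialLinearGroup (Fin 2) ℂ) : Matrix (Fin 2) (Fin 2) ℂ).mulVec v))
    (hη : ∀ v, Pval d η' v = Pval d η
      (((g⁻¹ : Matrix.SpecialLinearGroup (Fin 2) ℂ) : Matrix (Fin 2) (Fin 2) ℂ).mulVec v)) :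
    ∑ k : Fin (d + 1), (-1 : ℂ) ^ (k : ℕ) * (d.choose (k : ℕ) : ℂ) *
        ξ' ⟨d - (k : ℕ), by omega⟩ * η' k =
      ∑ k : Fin (d + 1), (-1 : ℂ) ^ (k : ℕ) * (d.choose (k : ℕ) : ℂ) *
        ξ ⟨d - (k : ℕ), by omega⟩ * η k := by
  have hrev (k : Fin (d + 1)) (hk : d - (k : ℕ) < d + 1) :
      (⟨d - (k : ℕ), hk⟩ : Fin (d + 1)) = k.rev := by
    ext
    simp [Fin.val_rev]
  simp only [hrev]
  have hdet := (g⁻¹).det_coe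
  generalize ((g⁻¹ : Matrix.SpecialLinearGroup (Fin 2) ℂ) : Matrix (Fin 2) (Fin 2) ℂ) = h at *
  rw [Matrix.det_fin_two] at hdet
  obtain ⟨c, rfl⟩ := exists_power_sum d η
  -- The linear form `iX + Y` composed with `h` is `a i X + b i Y`.
  let a : Fin (d + 1) → ℂ := fun i => ((i : ℕ) : ℂ) * h 0 0 + h 1 0
  let b : Fin (d + 1) → ℂ := fun i => ((i : ℕ) : ℂ) * h 0 1 + h 1 1
  have hη' : η' = fun k : Fin (d + 1) => ∑ i, c i * (a i ^ (k : ℕ) * b i ^ (d - (k : ℕ))) := by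
    apply Pval_injective
    intro v
    rw [hη, Pval_sum d c (fun i k => ((i : ℕ) : ℂ) ^ (k : ℕ) * 1 ^ (d - (k : ℕ))),
      Pval_sum d c (fun i k => a i ^ (k : ℕ) * b i ^ (d - (k : ℕ)))]
    refine Finset.sum_congr rfl fun i _ => ?_
    rw [Pval_power, Pval_power]
    simp only [Matrix.mulVec, dotProduct, Fin.sum_univ_two, a, b]
    ring
  rw [hη', pairing_power_sum, pairing_power_sum d ξ c (fun i => ((i : ℕ) : ℂ)) (fun _ => 1)]
  refine Finset.sum_congr rfl fun i _ => ?_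
  rw [hξ]
  congr 2
  ext j
  fin_cases j
  · simp [Matrix.mulVec, dotProduct, Fin.sum_univ_two, a, b]
    linear_combination hdet
  · simp [Matrix.mulVec, dotProduct, Fin.sum_univ_two, a, b]
    linear_combination (-((i : ℕ) : ℂ)) * hdet
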